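/- Let D be an integral domain and ⋆ a semistar operation on D. The following are equivalent: (1) D is a ⋆-Dedekind domain; (2) D is a ⋆-almost Dedekind domain and D has the ⋆_f-finite character property (every nonzero element of D belongs to only finitely many quasi-⋆_f-maximal ideals); (3) D is a ⋆-Noetherian ⋆-almost Dedekind domain. -/

import Mathlib

open scoped Pointwise

section SemistarDefs

variable {D : Type*} [CommRing D] [IsDomain D]
variable {K : Type*} [Field K] [Algebra D K] [IsFractionRing D K]

/-- `star` is a semistar operation on the integral domain `D` with quotient field `K`:
a map on (nonzero) `D`-submodules of `K` satisfying `(xE)^⋆ = x·E^⋆`, monotonicity,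
extensivity and idempotence. -/
structure IsSemistarOperation (star : Submodule D K → Submodule D K) : Prop where
  ne_bot : ∀ {E : Submodule D K}, E ≠ ⊥ → star E ≠ ⊥
  map_smul : ∀ (x : K), x ≠ 0 → ∀ {E : Submodule D K}, E ≠ ⊥ →
    star (Submodule.map (LinearMap.mulLeft D x) E) = Submodule.map (LinearMap.mulLeft D x) (star E)
  mono : ∀ {E F : Submodule D K}, E ≠ ⊥ → F ≠ ⊥ → E ≤ F → star E ≤ star F
  le_star : ∀ {E : Submodule D K}, E ≠ ⊥ → E ≤ star E
  star_star : ∀ {E : Submodule D K}, E ≠ ⊥ → star (star E) = star E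

/-- The image in `K` of an ideal `I` of `D`, as a `D`-submodule of `K`. -/
def idealExt (K : Type*) [Field K] [Algebra D K] (I : Ideal D) : Submodule D K :=
  Submodule.map (Algebra.linearMap D K) I

/-- `I` is a quasi-⋆-ideal: a nonzero ideal of `D` with `I = I^⋆ ∩ D`. -/
def QuasiStarIdeal (star : Submodule D K → Submodule D K) (I : Ideal D) : Prop :=
  I ≠ ⊥ ∧ Submodule.comap (Algebra.linearMap D K) (star (idealExt K I)) = I

/-- `P` is a quasi-⋆-prime: a prime ideal which is a quasi-⋆-ideal. -/
def QuasiStarPrime (star : Submodule D K → Submodule D K) (P : Ideal D) : Prop :=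
  P.IsPrime ∧ QuasiStarIdeal star P

/-- `M` is a quasi-⋆-maximal ideal: maximal in the set of proper quasi-⋆-ideals of `D`. -/
def QuasiStarMaximal (star : Submodule D K → Submodule D K) (M : Ideal D) : Prop :=
  QuasiStarIdeal star M ∧ M ≠ ⊤ ∧
    ∀ J : Ideal D, QuasiStarIdeal star J → J ≠ ⊤ → M ≤ J → J = M

/-- The finite-type semistar operation `⋆_f` associated to `⋆`:
`E^{⋆_f} = ⋃ { F^⋆ : F nonzero finitely generated, F ⊆ E }`. -/
def finTypeOp (star : Submodule D K → Submodule D K) : Submodule D K → Submodule D K :=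
  fun E => ⨆ (F : Submodule D K) (_ : F ≠ ⊥) (_ : F.FG) (_ : F ≤ E), star F

/-- The extension `E·D_Q` of a `D`-submodule `E` of `K` to the localization of `D` at
(the complement of) `Q`, described as `{ x ∈ K : s·x ∈ E for some s ∉ Q }`. -/
def extendToPrime (Q : Ideal D) (E : Submodule D K) : Submodule D K :=
  Submodule.span D {x : K | ∃ s : D, s ∉ Q ∧ algebraMap D K s * x ∈ E}

/-- The stable semistar operation of finite type `⋆̃` associated to `⋆`:
`E^⋆̃ = ⋂ { E·D_Q : Q a quasi-⋆_f-maximal ideal of D }`. -/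
def stableOp (star : Submodule D K → Submodule D K) : Submodule D K → Submodule D K :=
  fun E => ⨅ (Q : Ideal D) (_ : QuasiStarMaximal (finTypeOp star) Q), extendToPrime Q E

/-- A rank-one discrete valuation ring: a (domain which is a) local PID which is not a field. -/
def IsDVR (R : Type*) [CommRing R] : Prop :=
  ∃ h : IsDomain R, @IsDiscreteValuationRing R _ h

/-- A valuation domain. -/
def IsValuationDomain (R : Type*) [CommRing R] : Prop :=
  ∃ h : IsDomain R, @ValuationRing R _ h

/-- `D` is a ⋆-almost Dedekind domain: `D_M` is a rank-one discrete valuation ring for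
every quasi-⋆_f-maximal ideal `M` of `D`. -/
def StarADD (star : Submodule D K → Submodule D K) : Prop :=
  ∀ (M : Ideal D) [M.IsPrime], QuasiStarMaximal (finTypeOp star) M →
    IsDVR (Localization.AtPrime M)

/-- `D` is a Prüfer ⋆-multiplication domain: `D_M` is a valuation domain for every
quasi-⋆_f-maximal ideal `M` of `D`. -/
def StarPMD (star : Submodule D K → Submodule D K) : Prop :=
  ∀ (M : Ideal D) [M.IsPrime], QuasiStarMaximal (finTypeOp star) M →
    IsValuationDomain (Localization.AtPrime M)

/-- `D` is ⋆-Noetherian: ascending chain condition on quasi-⋆-ideals. -/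
def StarNoetherian (star : Submodule D K → Submodule D K) : Prop :=
  ∀ c : ℕ →o Ideal D, (∀ n, QuasiStarIdeal star (c n)) → ∃ n, ∀ m, n ≤ m → c m = c n

/-- `D` is a ⋆-Dedekind domain: ⋆-Noetherian and a P⋆MD. -/
def StarDedekind (star : Submodule D K → Submodule D K) : Prop :=
  StarNoetherian star ∧ StarPMD star

/-- `D` has the ⋆_f-finite character property: every nonzero element of `D` lies in only
finitely many quasi-⋆_f-maximal ideals. -/
def StarFiniteCharacter (star : Submodule D K → Submodule D K) : Prop :=
  ∀ d : D, d ≠ 0 → {M : Ideal D | QuasiStarMaximal (finTypeOp star) M ∧ d ∈ M}.Finite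

/-- The `v`-operation `E ↦ (D : (D : E))`. -/
def vOp : Submodule D K → Submodule D K := fun E => 1 / (1 / E)

/-- A nonzero `D`-submodule `E` of `K` is quasi-∗-invertible if `(E·(D^∗ : E))^∗ = D^∗`. -/
def QuasiStarInvertible (star : Submodule D K → Submodule D K) (E : Submodule D K) : Prop :=
  star (E * (star 1 / E)) = star (1 : Submodule D K)

/-- `D` has the ∗-cancellation law: for nonzero fractional ideals `A`, `B`, `C`,
`(AB)^∗ = (AC)^∗` implies `B^∗ = C^∗`. -/
def StarCancellation (star : Submodule D K → Submodule D K) : Prop :=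
  ∀ A B C : Submodule D K, A ≠ ⊥ → B ≠ ⊥ → C ≠ ⊥ →
    IsFractional (nonZeroDivisors D) A → IsFractional (nonZeroDivisors D) B →
    IsFractional (nonZeroDivisors D) C →
    star (A * B) = star (A * C) → star B = star C

/-- The ∗-dimension of `D`: the supremum of the lengths of chains of quasi-∗-prime ideals
of `D` (between `(0)` and a quasi-∗-prime). -/
noncomputable def starDim (star : Submodule D K → Submodule D K) : ℕ∞ :=
  ⨆ (k : ℕ) (_ : ∃ c : Fin k → Ideal D, StrictMono c ∧ ∀ i, QuasiStarPrime star (c i)),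
    (k : ℕ∞)

/-- A submodule `T` of `K` (containing the image of an integral domain with quotient
field `K`) is integrally closed (in `K`) if every `x ∈ K` satisfying a monic polynomial
equation with coefficients in `T` belongs to `T`. -/
def IntegrallyClosedSub (T : Submodule D K) : Prop :=
  ∀ x : K, (∃ (n : ℕ) (c : Fin n → K), (∀ i, c i ∈ T) ∧
    x ^ n = ∑ i : Fin n, c i * x ^ (i : ℕ)) → x ∈ T

/-- The content ideal `c(p)` of a polynomial: the ideal generated by its coefficients. -/
def contentIdeal (p : Polynomial D) : Ideal D := Ideal.span (Set.range p.coeff)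

/-- The multiplicative set `N(⋆) = { h ∈ D[X] : h ≠ 0, c(h)^⋆ = D^⋆ }` (as a submonoid,
via the closure of this multiplicatively closed set). -/
noncomputable def nagataMonoid (star : Submodule D K → Submodule D K) : Submonoid (Polynomial D) :=
  Submonoid.closure
    {p : Polynomial D | p ≠ 0 ∧ star (idealExt K (contentIdeal p)) = star (1 : Submodule D K)}

/-- The Nagata ring `Na(D,⋆) = D[X]_{N(⋆)}`. -/
abbrev NagataRing (star : Submodule D K → Submodule D K) :=
  Localization (nagataMonoid star)

/-- `V` is a valuation overring of `D` (inside the quotient field `K`): `D ⊆ V ⊆ K` and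
for every nonzero `x ∈ K`, `x ∈ V` or `x⁻¹ ∈ V`. -/
def IsValuationOverring (D : Type*) [CommRing D] {K : Type*} [Field K] [Algebra D K]
    (V : Subring K) : Prop :=
  (∀ d : D, algebraMap D K d ∈ V) ∧ ∀ x : K, x ≠ 0 → (x ∈ V ∨ x⁻¹ ∈ V)

/-- `V` is a ∗-valuation overring of `D`: a valuation overring such that `F^∗ ⊆ FV` for
every nonzero finitely generated `D`-submodule `F` of `K`. -/
def IsStarValuationOverring (star : Submodule D K → Submodule D K) (V : Subring K) : Prop :=
  IsValuationOverring D V ∧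
    ∀ F : Submodule D K, F ≠ ⊥ → F.FG →
      star F ≤ Submodule.span D ((F : Set K) * (V : Set K))

/-- `D` is a Krull domain: there is a family of rank-one discrete valuation overrings of `D`
with quotient field `K` whose intersection is `D`, with finite character. -/
def IsKrullDomain (D : Type*) [CommRing D] (K : Type*) [Field K] [Algebra D K] : Prop :=
  ∃ 𝒱 : Set (Subring K),
    (∀ V ∈ 𝒱, (∀ d : D, algebraMap D K d ∈ V) ∧ IsDVR V ∧
      ∀ x : K, ∃ a ∈ V, ∃ b ∈ V, b ≠ 0 ∧ x * b = a) ∧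
    (⋂ V ∈ 𝒱, (V : Set K)) = Set.range (algebraMap D K) ∧
    ∀ d : D, d ≠ 0 → {V ∈ 𝒱 | ¬ ∃ y ∈ V, algebraMap D K d * y = 1}.Finite

end SemistarDefs

/-! `I ↦ I^⋆ ∩ D` is a closure operator `c` on the ideals of `D`, and the quasi-`⋆_f`-ideals are
the nonzero closed ideals of its finitary part `c_f`.

If `D` is `⋆`-Noetherian, then `c = c_f` and every closed ideal is `c(J)` with `J` finitely
generated; cancellation gives `c(J) D_M = J D_M` whenever `M` is a closed prime and `D_M` is a
valuation ring, so `D_M` is Noetherian, hence a DVR. Moreover each maximal closed `M` containing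
`d ≠ 0` misses an element common to all other maximal closed ideals containing `d`, and the chain
condition leaves room for only finitely many such `M`.

Conversely, `c_f`-closed ideals are determined by their localizations at the maximal ones, so a
chain of them containing `d ≠ 0` is governed by the finitely many Noetherian rings `D_M` with
`d ∈ M`. -/

section ClosureOperators

variable {α : Type*} [CompleteLattice α] {c : ClosureOperator α} {a : α}

/-- The finitary part `c_f` of a closure operator `c`, for which `a` is closed if and only if
`c k ≤ a` for each compact `k ≤ a`; the passage from `⋆` to `⋆_f` at the level of ideals. -/
def finitaryPart (c : ClosureOperator α) : ClosureOperator α :=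
  ClosureOperator.ofCompletePred (fun a => ∀ k, IsCompactElement k → k ≤ a → c k ≤ a)
    fun _ hs k hk hks => le_sInf fun a ha => hs a ha k hk (hks.trans (sInf_le ha))

/-- A closure operator is finitary if directed suprema of closed elements are closed. -/
def IsFinitary (c : ClosureOperator α) : Prop :=
  ∀ s : Set α, s.Nonempty → DirectedOn (· ≤ ·) s → (∀ a ∈ s, c.IsClosed a) → c.IsClosed (sSup s)

/-- A maximal element among the closed elements other than `⊤`; for the closure `I ↦ I^⋆ ∩ D`
these are the quasi-`⋆`-maximal ideals, and possibly the zero ideal. -/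
def IsMaximalClosed (c : ClosureOperator α) (m : α) : Prop :=
  Maximal (fun a => c.IsClosed a ∧ a ≠ ⊤) m

theorem isClosed_finitaryPart_iff :
    (finitaryPart c).IsClosed a ↔ ∀ k, IsCompactElement k → k ≤ a → c k ≤ a :=
  Iff.rfl

theorem isClosed_finitaryPart (ha : c.IsClosed a) : (finitaryPart c).IsClosed a :=
  fun _ _ hka => c.closure_min hka ha

theorem isFinitary_finitaryPart (c : ClosureOperator α) : IsFinitary (finitaryPart c) := by
  intro s hne hdir hs k hk hks
  obtain ⟨a, ha, hka⟩ :=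
    (CompleteLattice.isCompactElement_iff_le_of_directed_sSup_le α k).mp hk s hne hdir hks
  exact (hs a ha k hk hka).trans (le_sSup ha)

theorem wellFoundedGT_closeds_of_finitaryPart [WellFoundedGT (finitaryPart c).Closeds] :
    WellFoundedGT c.Closeds :=
  StrictMono.wellFoundedGT (f := fun a : c.Closeds =>
    (⟨a, isClosed_finitaryPart a.2⟩ : (finitaryPart c).Closeds)) fun _ _ h => h

theorem wellFoundedGT_closeds_iff : WellFoundedGT c.Closeds ↔
    ∀ f : ℕ →o α, (∀ n, f n ≠ ⊥ ∧ c.IsClosed (f n)) →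
      ∃ n, ∀ m, n ≤ m → f m = f n := by
  rw [wellFoundedGT_iff_monotone_chain_condition]
  refine ⟨fun h f hf => ?_, fun h f => ?_⟩
  · obtain ⟨n, hn⟩ := h ⟨fun n => ⟨f n, (hf n).2⟩, f.monotone⟩
    exact ⟨n, fun m hm => (congrArg Subtype.val (hn m hm)).symm⟩
  by_cases hbot : ∀ n, (f n).1 = ⊥
  · exact ⟨0, fun m _ => Subtype.ext ((hbot 0).trans (hbot m).symm)⟩
  obtain ⟨k, hk⟩ := not_forall.mp hbot
  obtain ⟨n, hn⟩ := h ⟨fun n => (f (k + n)).1, fun m n hmn => f.monotone (by gcongr)⟩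
    fun n => ⟨ne_bot_of_le_ne_bot hk (f.monotone (Nat.le_add_right k n)), (f (k + n)).2⟩
  refine ⟨k + n, fun m hm => Subtype.ext ?_⟩
  obtain ⟨j, rfl⟩ := Nat.exists_eq_add_of_le hm
  rw [add_assoc]
  exact (hn (n + j) (Nat.le_add_right n j)).symm

theorem IsFinitary.exists_isMaximalClosed_ge (hc : IsFinitary c)
    (htop : IsCompactElement (⊤ : α)) (ha : c.IsClosed a) (hne : a ≠ ⊤) :
    ∃ m, a ≤ m ∧ IsMaximalClosed c m := by
  refine zorn_le_nonempty₀ {x | c.IsClosed x ∧ x ≠ ⊤} (fun s hs hchain b hb => ?_) a ⟨ha, hne⟩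
  refine ⟨sSup s, ⟨hc s ⟨b, hb⟩ hchain.directedOn fun x hx => (hs hx).1, ?_⟩, fun _ => le_sSup⟩
  exact (CompleteLattice.IsCompactElement.directed_sSup_lt_of_lt htop ⟨b, hb⟩ hchain.directedOn
    fun x hx => (hs hx).2.lt_top).ne

theorem exists_isCompactElement_closure_eq [IsCompactlyGenerated α] [WellFoundedGT c.Closeds]
    (a : α) : ∃ k, IsCompactElement k ∧ k ≤ a ∧ c k = c a := by
  classical
  obtain ⟨-, ⟨t, ht, rfl⟩, hmax⟩ := exists_maximal_of_wellFoundedGT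
    (fun x : c.Closeds => ∃ t : Finset α,
      (∀ k ∈ t, IsCompactElement k ∧ k ≤ a) ∧ c.toCloseds (t.sup id) = x)
    ⟨_, ∅, by simp only [Finset.notMem_empty, false_implies, implies_true], rfl⟩
  have hta : t.sup id ≤ a := Finset.sup_le fun k hk => (ht k hk).2
  refine ⟨t.sup id, CompleteLattice.isCompactElement_finsetSup t fun k hk => (ht k hk).1, hta,
    le_antisymm (c.monotone hta) (c.closure_min ?_ (c.isClosed_closure _))⟩
  refine le_iff_compact_le_imp.mpr fun l hl hla => ?_
  have hinsert : c ((insert l t).sup id) ≤ c (t.sup id) :=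
    hmax ⟨insert l t, Finset.forall_mem_insert _ _ _ |>.mpr ⟨⟨hl, hla⟩, ht⟩, rfl⟩
      (c.monotone (Finset.sup_mono (Finset.subset_insert l t)))
  calc l ≤ (insert l t).sup id := Finset.le_sup (f := id) (Finset.mem_insert_self l t)
    _ ≤ c ((insert l t).sup id) := c.le_closure _
    _ ≤ c (t.sup id) := hinsert

theorem finitaryPart_eq_self [IsCompactlyGenerated α] [WellFoundedGT c.Closeds] :
    finitaryPart c = c := by
  refine ClosureOperator.ext_isClosed _ _ fun a => ⟨fun ha => ?_, isClosed_finitaryPart⟩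
  obtain ⟨k, hk, hka, hkc⟩ := exists_isCompactElement_closure_eq (c := c) a
  exact c.isClosed_iff_closure_le.mpr (hkc ▸ ha k hk hka)

/-- Among the closed elements `sInf (T \ F)`, with `F ⊆ T` finite, a maximal one has `F = T`. -/
theorem finite_of_forall_not_sInf_diff_singleton_le [WellFoundedGT c.Closeds] {T : Set α}
    (hclosed : ∀ m ∈ T, c.IsClosed m) (hT : ∀ m ∈ T, ¬ sInf (T \ {m}) ≤ m) : T.Finite := by
  obtain ⟨-, ⟨F, hF, rfl⟩, hmax⟩ := exists_maximal_of_wellFoundedGT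
    (fun x : c.Closeds => ∃ F : Set α, F.Finite ∧
      (⟨sInf (T \ F), c.sInf_isClosed fun m hm => hclosed m hm.1⟩ : c.Closeds) = x)
    ⟨_, ∅, Set.finite_empty, rfl⟩
  refine hF.subset fun m hm => by_contra fun hmF => hT m hm ?_
  have hle : sInf (T \ insert m F) ≤ sInf (T \ F) :=
    hmax ⟨insert m F, hF.insert m, rfl⟩ (sInf_le_sInf (by grind))
  calc sInf (T \ {m}) ≤ sInf (T \ insert m F) := sInf_le_sInf (by grind)
    _ ≤ sInf (T \ F) := hle
    _ ≤ m := sInf_le ⟨hm, hmF⟩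

end ClosureOperators

section IdealClosures

variable {R : Type*} [CommRing R] {c : ClosureOperator (Ideal R)} {I J M : Ideal R}

/-- `(I : a)` is closed whenever `I` is; equivalently, `a · c(I) ⊆ c(aI)` for all `a` and `I`. -/
def IsColonStable (c : ClosureOperator (Ideal R)) : Prop :=
  ∀ (a : R) (I : Ideal R), c.IsClosed I → c.IsClosed (I.colon {a})

/-- `(c(aI) : a) = c(I)` for `a ≠ 0`: what the law `(xE)^⋆ = x E^⋆` becomes for the closure
`I ↦ I^⋆ ∩ D`, where `c(aI)` may be strictly larger than `a · c(I)`. -/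
def IsScaleInvariant (c : ClosureOperator (Ideal R)) : Prop :=
  ∀ ⦃a : R⦄, a ≠ 0 → ∀ (I : Ideal R) (x : R), a * x ∈ c (Ideal.span {a} * I) ↔ x ∈ c I

theorem span_singleton_mul_le_iff_le_colon {a : R} :
    Ideal.span {a} * J ≤ I ↔ J ≤ I.colon {a} := by
  rw [Ideal.span_singleton_mul_le_iff]
  simp only [SetLike.le_def, Submodule.mem_colon_singleton, smul_eq_mul, mul_comm a]

theorem IsScaleInvariant.isColonStable (hc : IsScaleInvariant c) : IsColonStable c := by
  intro a I hI
  refine c.isClosed_iff_closure_le.mpr fun x hx => Submodule.mem_colon_singleton.mpr ?_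
  rcases eq_or_ne a 0 with rfl | ha
  · simp only [smul_zero, zero_mem]
  have hle : c (Ideal.span {a} * I.colon {a}) ≤ I :=
    c.closure_min (span_singleton_mul_le_iff_le_colon.mpr le_rfl) hI
  rw [smul_eq_mul, mul_comm]
  exact hle ((hc ha _ x).mpr hx)

theorem IsColonStable.finitaryPart (hc : IsColonStable c) : IsColonStable (finitaryPart c) := by
  intro a I hI J hJ hJI
  rw [← span_singleton_mul_le_iff_le_colon] at hJI ⊢
  have hfg : IsCompactElement (Ideal.span {a} * J) :=
    (Submodule.fg_iff_compact _).mp <|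
      (Submodule.fg_span_singleton a).mul ((Submodule.fg_iff_compact J).mpr hJ)
  have hcJ : c J ≤ (c (Ideal.span {a} * J)).colon {a} :=
    c.closure_min (span_singleton_mul_le_iff_le_colon.mp (c.le_closure _))
      (hc a _ (c.isClosed_closure _))
  exact (span_singleton_mul_le_iff_le_colon.mpr hcJ).trans (hI _ hfg hJI)

theorem IsMaximalClosed.isPrime (hM : IsMaximalClosed c M) (hc : IsColonStable c) :
    M.IsPrime := by
  refine ⟨hM.prop.2, fun {a b} hab => or_iff_not_imp_left.mpr fun ha => ?_⟩
  have hne : M.colon {a} ≠ ⊤ := by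
    simpa only [ne_eq, Submodule.colon_eq_top_iff_subset, Set.singleton_subset_iff,
      SetLike.mem_coe] using ha
  refine hM.le_of_ge ⟨hc a M hM.prop.1, hne⟩ Ideal.le_colon ?_
  rwa [Submodule.mem_colon_singleton, smul_eq_mul, mul_comm]

theorem le_of_forall_isMaximalClosed_map_le (hfin : IsFinitary c) (hc : IsColonStable c)
    (hJ : c.IsClosed J) (hJ0 : J ≠ ⊥)
    (h : ∀ (M : Ideal R) [M.IsPrime], IsMaximalClosed c M → M ≠ ⊥ →
      I.map (algebraMap R (Localization.AtPrime M)) ≤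
        J.map (algebraMap R (Localization.AtPrime M))) :
    I ≤ J := by
  intro x hx
  by_contra hxJ
  have hne : J.colon {x} ≠ ⊤ := by
    simpa only [ne_eq, Submodule.colon_eq_top_iff_subset, Set.singleton_subset_iff,
      SetLike.mem_coe] using hxJ
  obtain ⟨M, hle, hM⟩ :=
    hfin.exists_isMaximalClosed_ge Ideal.isCompactElement_top (hc x J hJ) hne
  have := hM.isPrime hc
  have hM0 : M ≠ ⊥ := ne_bot_of_le_ne_bot hJ0 (Ideal.le_colon.trans hle)
  obtain ⟨s, hs, hsx⟩ := (IsLocalization.algebraMap_mem_map_algebraMap_iff M.primeCompl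
    (Localization.AtPrime M) J x).mp (h M hM hM0 (Ideal.mem_map_of_mem _ hx))
  exact hs (hle (Submodule.mem_colon_singleton.mpr hsx))

/-- A nonzero `d` in every term of a chain localizes to a unit at all but finitely many maximal
closed ideals, so only finitely many localized chains have to stabilize. -/
theorem wellFoundedGT_closeds_of_isNoetherianRing_localization (hfin : IsFinitary c)
    (hc : IsColonStable c)
    (hnoeth : ∀ (M : Ideal R) [M.IsPrime], IsMaximalClosed c M → M ≠ ⊥ →
      IsNoetherianRing (Localization.AtPrime M))
    (hfinite : ∀ d : R, d ≠ 0 → {M | IsMaximalClosed c M ∧ d ∈ M}.Finite) :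
    WellFoundedGT c.Closeds := by
  refine wellFoundedGT_closeds_iff.mpr fun f hf => ?_
  obtain ⟨d, hd, hd0⟩ := Submodule.exists_mem_ne_zero_of_ne_bot (hf 0).1
  have hstable : ∀ M : Ideal R, ∃ n, ∀ [M.IsPrime], IsMaximalClosed c M → M ≠ ⊥ → ∀ m, n ≤ m →
      (f m).map (algebraMap R (Localization.AtPrime M)) ≤
        (f n).map (algebraMap R (Localization.AtPrime M)) := by
    intro M
    by_cases hM : IsMaximalClosed c M ∧ M ≠ ⊥
    · have := hM.1.isPrime hc
      have := hnoeth M hM.1 hM.2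
      obtain ⟨n, hn⟩ := monotone_stabilizes_iff_noetherian.mpr this
        ⟨fun n => (f n).map (algebraMap R (Localization.AtPrime M)),
          fun _ _ h => Ideal.map_mono (f.monotone h)⟩
      exact ⟨n, fun _ _ m hm => (hn m hm).ge⟩
    · exact ⟨0, fun h h0 => absurd ⟨h, h0⟩ hM⟩
  choose g hg using hstable
  set n := (hfinite d hd0).toFinset.sup g
  refine ⟨n, fun m hm => le_antisymm ?_ (f.monotone hm)⟩
  refine le_of_forall_isMaximalClosed_map_le hfin hc (hf n).2 (hf n).1 fun M _ hM hM0 => ?_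
  by_cases hdM : d ∈ M
  · have hgn : g M ≤ n := Finset.le_sup ((hfinite d hd0).mem_toFinset.mpr ⟨hM, hdM⟩)
    exact (hg M hM hM0 m (hgn.trans hm)).trans (Ideal.map_mono (f.monotone hgn))
  · have htop : (f n).map (algebraMap R (Localization.AtPrime M)) = ⊤ :=
      Ideal.eq_top_of_isUnit_mem _ (Ideal.mem_map_of_mem _ (f.monotone (Nat.zero_le n) hd))
        (IsLocalization.map_units _ (⟨d, hdM⟩ : M.primeCompl))
    exact htop ▸ le_top

end IdealClosures

section ValuationLocalizations

theorem exists_mem_span_singleton_mul_le_of_map_le {R : Type*} [CommRing R] (S : Submonoid R)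
    (A : Type*) [CommRing A] [Algebra R A] [IsLocalization S A] {I J : Ideal R} (hJ : J.FG)
    (h : J.map (algebraMap R A) ≤ I.map (algebraMap R A)) :
    ∃ s ∈ S, Ideal.span {s} * J ≤ I := by
  induction J, hJ using Submodule.fg_induction with
  | singleton x =>
    obtain ⟨s, hs, hsx⟩ := (IsLocalization.algebraMap_mem_map_algebraMap_iff S A I x).mp
      (h (Ideal.mem_map_of_mem _ (Submodule.mem_span_singleton_self x)))
    refine ⟨s, hs, ?_⟩
    rwa [Ideal.submodule_span_eq, Ideal.span_singleton_mul_span_singleton,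
      Ideal.span_singleton_le_iff_mem]
  | sup J₁ J₂ _ _ ih₁ ih₂ =>
    obtain ⟨s₁, hs₁, h₁⟩ := ih₁ ((Ideal.map_mono le_sup_left).trans h)
    obtain ⟨s₂, hs₂, h₂⟩ := ih₂ ((Ideal.map_mono le_sup_right).trans h)
    refine ⟨s₁ * s₂, S.mul_mem hs₁ hs₂, ?_⟩
    rw [Ideal.mul_sup, ← Ideal.span_singleton_mul_span_singleton]
    refine sup_le ?_ ?_
    · rw [mul_right_comm]
      exact Ideal.mul_le_left.trans h₁
    · rw [mul_assoc]
      exact Ideal.mul_le_right.trans h₂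

variable {R : Type*} [CommRing R] [IsDomain R] {c : ClosureOperator (Ideal R)}
  {J M : Ideal R} [M.IsPrime]

/-- If `y ∈ c(J)` were not in `J R_M`, then `J R_M ⊆ y M R_M` since `R_M` is a valuation ring,
so `s J ⊆ y M` for some `s ∉ M`; cancelling `y` in `s y ∈ c(y M)` gives `s ∈ c(M) = M`. -/
theorem map_closure_le_map_of_fg (hc : IsScaleInvariant c) (hM : c.IsClosed M)
    [ValuationRing (Localization.AtPrime M)] (hJ : J.FG) :
    (c J).map (algebraMap R (Localization.AtPrime M)) ≤
      J.map (algebraMap R (Localization.AtPrime M)) := by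
  set φ := algebraMap R (Localization.AtPrime M)
  refine Ideal.map_le_iff_le_comap.mpr fun y hy => ?_
  by_contra hyJ
  have hy0 : y ≠ 0 := by
    rintro rfl
    exact hyJ (zero_mem _)
  have hloc : J.map φ ≤ (Ideal.span {y} * M).map φ := by
    refine Ideal.map_le_iff_le_comap.mpr fun j hj => ?_
    rcases ValuationRing.dvd_total (φ j) (φ y) with hjy | ⟨u, hu⟩
    · exact absurd (Ideal.mem_of_dvd _ hjy (Ideal.mem_map_of_mem φ hj)) hyJ
    have hu_mem : u ∈ M.map φ := by
      rw [Localization.AtPrime.map_eq_maximalIdeal, IsLocalRing.mem_maximalIdeal, mem_nonunits_iff]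
      intro hunit
      refine hyJ (Ideal.mem_comap.mpr (Ideal.mem_of_dvd _ ?_ (Ideal.mem_map_of_mem φ hj)))
      rw [hu]
      exact (associated_mul_unit_left _ u hunit).dvd
    rw [Ideal.mem_comap, hu, Ideal.map_mul]
    exact Ideal.mul_mem_mul (Ideal.mem_map_of_mem φ (Ideal.mem_span_singleton_self y)) hu_mem
  obtain ⟨s, hs, hsJ⟩ := exists_mem_span_singleton_mul_le_of_map_le M.primeCompl _ hJ hloc
  have hs0 : s ≠ 0 := by
    rintro rfl
    exact hs (zero_mem M)
  have hsy : y * s ∈ c (Ideal.span {y} * M) :=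
    mul_comm s y ▸ c.monotone hsJ ((hc hs0 J y).mpr hy)
  exact hs (hM.closure_eq.le ((hc hy0 M s).mp hsy))

theorem isNoetherianRing_localization_of_isClosed (hc : IsScaleInvariant c)
    [WellFoundedGT c.Closeds] (hM : c.IsClosed M) [ValuationRing (Localization.AtPrime M)] :
    IsNoetherianRing (Localization.AtPrime M) := by
  refine ⟨fun N => ?_⟩
  set φ := algebraMap R (Localization.AtPrime M)
  obtain ⟨J, hJ, hJN, hcJ⟩ := exists_isCompactElement_closure_eq (c := c) (Ideal.comap φ N)
  have hfg : J.FG := (Submodule.fg_iff_compact J).mpr hJ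
  have hN : N = J.map φ := by
    refine le_antisymm ?_ (Ideal.map_le_iff_le_comap.mpr hJN)
    calc N = (Ideal.comap φ N).map φ := (IsLocalization.map_under M.primeCompl _ N).symm
      _ ≤ (c J).map φ := Ideal.map_mono (hcJ ▸ c.le_closure _)
      _ ≤ J.map φ := map_closure_le_map_of_fg hc hM hfg
  exact hN ▸ hfg.map φ

theorem isDiscreteValuationRing_localization_of_isClosed (hc : IsScaleInvariant c)
    [WellFoundedGT c.Closeds] (hM : c.IsClosed M) (hM0 : M ≠ ⊥)
    [ValuationRing (Localization.AtPrime M)] :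
    IsDiscreteValuationRing (Localization.AtPrime M) := by
  have := isNoetherianRing_localization_of_isClosed hc hM
  have hfield : ¬ IsField (Localization.AtPrime M) := by
    rwa [IsLocalRing.isField_iff_maximalIdeal_eq, ← Localization.AtPrime.map_eq_maximalIdeal,
      Ideal.map_eq_bot_iff_of_injective
        (IsLocalization.injective _ M.primeCompl_le_nonZeroDivisors)]
  exact ((IsDiscreteValuationRing.TFAE _ hfield).out 0 1).mpr ‹ValuationRing _›

/-- Take `J ⊆ M` finitely generated with `c(J) = c(M)`. Then `s Jᵉ ⊆ (d)` for some `e` and some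
`s ∉ M`, while a closed prime containing `J` contains `M`. -/
theorem exists_notMem_forall_isPrime_mem [WellFoundedGT c.Closeds]
    [IsDiscreteValuationRing (Localization.AtPrime M)] {d : R} (hd : d ≠ 0) :
    ∃ s ∉ M, ∀ P : Ideal R, P.IsPrime → c.IsClosed P → d ∈ P → ¬ M ≤ P → s ∈ P := by
  set φ := algebraMap R (Localization.AtPrime M)
  obtain ⟨J, hJ, hJM, hcJ⟩ := exists_isCompactElement_closure_eq (c := c) M
  have hfg : J.FG := (Submodule.fg_iff_compact J).mpr hJ
  obtain ⟨e, he⟩ : ∃ e, Ideal.span {φ d} = IsLocalRing.maximalIdeal _ ^ e := by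
    have hφd : Ideal.span {φ d} ≠ ⊥ := by
      rw [ne_eq, Ideal.span_singleton_eq_bot]
      exact (map_ne_zero_iff φ (IsLocalization.injective _ M.primeCompl_le_nonZeroDivisors)).mpr hd
    have hfield := IsDiscreteValuationRing.not_isField (Localization.AtPrime M)
    have hpow := ((IsDiscreteValuationRing.TFAE _ hfield).out 0 6).mp ‹_›
    exact hpow _ hφd
  have hloc : (J ^ e).map φ ≤ (Ideal.span {d}).map φ := by
    rw [Ideal.map_span, Set.image_singleton, he, Ideal.map_pow,
      ← Localization.AtPrime.map_eq_maximalIdeal]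
    exact Ideal.pow_right_mono (Ideal.map_mono hJM) e
  obtain ⟨s, hs, hsJ⟩ :=
    exists_mem_span_singleton_mul_le_of_map_le M.primeCompl _ (hfg.pow (n := e)) hloc
  refine ⟨s, hs, fun P hP hPc hdP hMP => ?_⟩
  have hle : Ideal.span {s} * J ^ e ≤ P :=
    hsJ.trans ((Ideal.span_singleton_le_iff_mem P).mpr hdP)
  refine (Ideal.span_singleton_le_iff_mem P).mp (((hP.mul_le).mp hle).resolve_right fun hJP => ?_)
  have hcJP : c J ≤ P := c.closure_min (hP.le_of_pow_le hJP) hPc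
  exact hMP ((hcJ ▸ c.le_closure M).trans hcJP)

theorem finite_setOf_isMaximalClosed_mem (hc : IsColonStable c) [WellFoundedGT c.Closeds]
    (hdvr : ∀ (M : Ideal R) [M.IsPrime], IsMaximalClosed c M → M ≠ ⊥ →
      IsDiscreteValuationRing (Localization.AtPrime M)) {d : R} (hd : d ≠ 0) :
    {M | IsMaximalClosed c M ∧ d ∈ M}.Finite := by
  refine finite_of_forall_not_sInf_diff_singleton_le (c := c) (fun M hM => hM.1.prop.1) ?_
  rintro M ⟨hM, hdM⟩ hle
  have := hM.isPrime hc
  have := hdvr M hM (Submodule.ne_bot_iff M |>.mpr ⟨d, hdM, hd⟩)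
  obtain ⟨s, hs, hsP⟩ := exists_notMem_forall_isPrime_mem (c := c) (M := M) hd
  refine hs (hle (Submodule.mem_sInf.mpr fun P hP => ?_))
  obtain ⟨⟨hPmax, hdP⟩, hPM⟩ := hP
  refine hsP P (hPmax.isPrime hc) hPmax.prop.1 hdP fun hMP => hPM ?_
  exact (hM.eq_of_le hPmax.prop hMP).symm

end ValuationLocalizations

section SemistarClosure

variable {D : Type*} [CommRing D] {K : Type*} [Field K] [Algebra D K]
  {star : Submodule D K → Submodule D K} {I M : Ideal D}

theorem mem_finTypeOp_iff (hstar : IsSemistarOperation star) {E : Submodule D K} (hE : E ≠ ⊥)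
    {x : K} : x ∈ finTypeOp star E ↔
      ∃ F : Submodule D K, (F ≠ ⊥ ∧ F.FG ∧ F ≤ E) ∧ x ∈ star F := by
  obtain ⟨d, hd, hd0⟩ := Submodule.exists_mem_ne_zero_of_ne_bot hE
  have : Nonempty {F : Submodule D K // F ≠ ⊥ ∧ F.FG ∧ F ≤ E} :=
    ⟨Submodule.span D {d}, Submodule.span_singleton_eq_bot.not.mpr hd0,
      Submodule.fg_span_singleton d, (Submodule.span_singleton_le_iff_mem d E).mpr hd⟩
  have hdir : Directed (· ≤ ·)
      fun F : {F : Submodule D K // F ≠ ⊥ ∧ F.FG ∧ F ≤ E} => star F := by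
    rintro ⟨F, hF0, hF, hFE⟩ ⟨G, hG0, hG, hGE⟩
    have hFG0 : F ⊔ G ≠ ⊥ := ne_bot_of_le_ne_bot hF0 le_sup_left
    exact ⟨⟨F ⊔ G, hFG0, hF.sup hG, sup_le hFE hGE⟩, hstar.mono hF0 hFG0 le_sup_left,
      hstar.mono hG0 hFG0 le_sup_right⟩
  have hiSup : finTypeOp star E = ⨆ F : {F : Submodule D K // F ≠ ⊥ ∧ F.FG ∧ F ≤ E}, star F := by
    simp only [finTypeOp, iSup_subtype, iSup_and]
  rw [hiSup, Submodule.mem_iSup_of_directed _ hdir, Subtype.exists]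
  simp only [exists_prop]

theorem idealExt_span_singleton_mul (a : D) (I : Ideal D) :
    idealExt K (Ideal.span {a} * I) =
      (idealExt K I).map (LinearMap.mulLeft D (algebraMap D K a)) := by
  ext y
  simp only [idealExt, Submodule.mem_map, Ideal.mem_span_singleton_mul, Algebra.linearMap_apply,
    LinearMap.mulLeft_apply, exists_exists_and_eq_and, map_mul]

variable [IsFractionRing D K]

theorem idealExt_ne_bot (hI : I ≠ ⊥) : idealExt K I ≠ ⊥ :=
  fun h => hI (Submodule.map_injective_of_injective (IsFractionRing.injective D K)
    (h.trans (Submodule.map_bot _).symm))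

theorem le_comap_star_idealExt (hstar : IsSemistarOperation star) (hI : I ≠ ⊥) :
    I ≤ (star (idealExt K I)).comap (Algebra.linearMap D K) :=
  Submodule.map_le_iff_le_comap.mp (hstar.le_star (idealExt_ne_bot hI))

theorem quasiStarIdeal_comap_star_idealExt (hstar : IsSemistarOperation star) (hI : I ≠ ⊥) :
    QuasiStarIdeal star ((star (idealExt K I)).comap (Algebra.linearMap D K)) := by
  have hne := ne_bot_of_le_ne_bot hI (le_comap_star_idealExt hstar hI)
  refine ⟨hne, le_antisymm (Submodule.comap_mono ?_) (le_comap_star_idealExt hstar hne)⟩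
  calc star (idealExt K ((star (idealExt K I)).comap (Algebra.linearMap D K)))
      ≤ star (star (idealExt K I)) := hstar.mono (idealExt_ne_bot hne)
        (hstar.ne_bot (idealExt_ne_bot hI)) (Submodule.map_comap_le _ _)
    _ = star (idealExt K I) := hstar.star_star (idealExt_ne_bot hI)

theorem QuasiStarIdeal.comap_star_idealExt_le (hstar : IsSemistarOperation star)
    {J : Ideal D} (hJ : QuasiStarIdeal star J) (hI : I ≠ ⊥) (hIJ : I ≤ J) :
    (star (idealExt K I)).comap (Algebra.linearMap D K) ≤ J :=
  (Submodule.comap_mono (hstar.mono (idealExt_ne_bot hI) (idealExt_ne_bot hJ.1)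
    (Submodule.map_mono hIJ))).trans hJ.2.le

open Classical in
/-- The closure operator `I ↦ I^⋆ ∩ D` on ideals, whose nonzero closed elements are the
quasi-`⋆`-ideals. As `⋆` is only meaningful on nonzero submodules, the zero ideal is declared
closed. -/
noncomputable def starClosure (hstar : IsSemistarOperation star) : ClosureOperator (Ideal D) :=
  ClosureOperator.ofPred
    (fun I => if I = ⊥ then ⊥ else (star (idealExt K I)).comap (Algebra.linearMap D K))
    (fun I => I = ⊥ ∨ QuasiStarIdeal star I)
    (fun I => by
      split_ifs with hI
      exacts [hI.le, le_comap_star_idealExt hstar hI])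
    (fun I => by
      split_ifs with hI
      exacts [.inl rfl, .inr (quasiStarIdeal_comap_star_idealExt hstar hI)])
    (fun I J hIJ hJ => by
      split_ifs with hI
      exacts [bot_le, (hJ.resolve_left (ne_bot_of_le_ne_bot hI hIJ)).comap_star_idealExt_le
        hstar hI hIJ])

theorem mem_starClosure_iff {hstar : IsSemistarOperation star} (hI : I ≠ ⊥) {x : D} :
    x ∈ starClosure hstar I ↔ algebraMap D K x ∈ star (idealExt K I) :=
  iff_of_eq (congrArg (x ∈ ·) (if_neg hI))

variable (hstar : IsSemistarOperation star)

theorem starClosure_bot : starClosure hstar ⊥ = ⊥ :=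
  if_pos rfl

theorem quasiStarIdeal_iff :
    QuasiStarIdeal star I ↔ I ≠ ⊥ ∧ (starClosure hstar).IsClosed I :=
  ⟨fun h => ⟨h.1, .inr h⟩, fun h => h.2.resolve_left h.1⟩

theorem starNoetherian_iff : StarNoetherian star ↔ WellFoundedGT (starClosure hstar).Closeds := by
  simp only [wellFoundedGT_closeds_iff, StarNoetherian, quasiStarIdeal_iff hstar]

theorem isScaleInvariant_starClosure [IsDomain D] : IsScaleInvariant (starClosure hstar) := by
  intro a ha I x
  rcases eq_or_ne I ⊥ with rfl | hI
  · simp only [Ideal.mul_bot, starClosure_bot, Ideal.mem_bot, mul_eq_zero, ha, false_or]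
  have hφa : algebraMap D K a ≠ 0 :=
    (map_ne_zero_iff _ (IsFractionRing.injective D K)).mpr ha
  have haI : Ideal.span {a} * I ≠ ⊥ :=
    mul_ne_zero (Ideal.span_singleton_eq_bot.not.mpr ha) hI
  rw [mem_starClosure_iff haI, mem_starClosure_iff hI, idealExt_span_singleton_mul,
    hstar.map_smul _ hφa (idealExt_ne_bot hI), map_mul]
  exact Function.Injective.mem_set_image (mul_right_injective₀ hφa)

theorem algebraMap_mem_finTypeOp_idealExt_iff (hI : I ≠ ⊥) {x : D} :
    algebraMap D K x ∈ finTypeOp star (idealExt K I) ↔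
      ∃ J : Ideal D, (J ≠ ⊥ ∧ J.FG ∧ J ≤ I) ∧ x ∈ starClosure hstar J := by
  have hinj : Function.Injective (Algebra.linearMap D K) := IsFractionRing.injective D K
  rw [mem_finTypeOp_iff hstar (idealExt_ne_bot hI)]
  constructor
  · rintro ⟨F, ⟨hF0, hF, hFI⟩, hx⟩
    obtain ⟨J, hJI, rfl⟩ : ∃ J ≤ I, idealExt K J = F :=
      ⟨F.comap (Algebra.linearMap D K),
        (Submodule.comap_mono hFI).trans (Submodule.comap_map_eq_of_injective hinj I).le,
        Submodule.map_comap_eq_of_le (hFI.trans LinearMap.map_le_range)⟩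
    have hJ0 : J ≠ ⊥ := by
      rintro rfl
      exact hF0 (Submodule.map_bot _)
    exact ⟨J, ⟨hJ0, Submodule.fg_of_fg_map_injective _ hinj hF, hJI⟩,
      (mem_starClosure_iff hJ0).mpr hx⟩
  · rintro ⟨J, ⟨hJ0, hJ, hJI⟩, hx⟩
    exact ⟨idealExt K J, ⟨idealExt_ne_bot hJ0, Submodule.FG.map _ hJ, Submodule.map_mono hJI⟩,
      (mem_starClosure_iff hJ0).mp hx⟩

theorem quasiStarIdeal_finTypeOp_iff : QuasiStarIdeal (finTypeOp star) I ↔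
    I ≠ ⊥ ∧ (finitaryPart (starClosure hstar)).IsClosed I := by
  refine and_congr_right fun hI => ?_
  simp only [isClosed_finitaryPart_iff, ← Submodule.fg_iff_compact]
  constructor
  · intro h J hJ hJI x hx
    rcases eq_or_ne J ⊥ with rfl | hJ0
    · exact bot_le (a := I) (starClosure_bot hstar ▸ hx)
    · exact h.le ((algebraMap_mem_finTypeOp_idealExt_iff hstar hI).mpr ⟨J, ⟨hJ0, hJ, hJI⟩, hx⟩)
  · refine fun h => le_antisymm (fun x hx => ?_) (fun x hx => ?_)
    · obtain ⟨J, ⟨-, hJ, hJI⟩, hx⟩ := (algebraMap_mem_finTypeOp_idealExt_iff hstar hI).mp hx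
      exact h J hJ hJI hx
    · rcases eq_or_ne x 0 with rfl | hx0
      · exact zero_mem _
      have hspan : Ideal.span {x} ≠ ⊥ := Ideal.span_singleton_eq_bot.not.mpr hx0
      exact (algebraMap_mem_finTypeOp_idealExt_iff hstar hI).mpr ⟨Ideal.span {x},
        ⟨hspan, Submodule.fg_span_singleton x, (Ideal.span_singleton_le_iff_mem I).mpr hx⟩,
        (starClosure hstar).le_closure _ (Ideal.mem_span_singleton_self x)⟩

theorem quasiStarMaximal_finTypeOp_iff : QuasiStarMaximal (finTypeOp star) M ↔
    M ≠ ⊥ ∧ IsMaximalClosed (finitaryPart (starClosure hstar)) M := by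
  simp only [QuasiStarMaximal, quasiStarIdeal_finTypeOp_iff hstar, IsMaximalClosed,
    maximal_iff]
  constructor
  · rintro ⟨⟨hM0, hM⟩, hne, hmax⟩
    exact ⟨hM0, ⟨hM, hne⟩, fun J hJ hMJ =>
      (hmax J ⟨ne_bot_of_le_ne_bot hM0 hMJ, hJ.1⟩ hJ.2 hMJ).symm⟩
  · rintro ⟨hM0, ⟨hM, hne⟩, hmax⟩
    exact ⟨⟨hM0, hM⟩, hne, fun J hJ hJne hMJ => (hmax ⟨hJ.2, hJne⟩ hMJ).symm⟩

end SemistarClosure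

section DedekindDomains

variable {D : Type*} [CommRing D] {K : Type*} [Field K] [Algebra D K]
  {star : Submodule D K → Submodule D K}

theorem StarADD.starPMD (h : StarADD star) : StarPMD star := fun M _ hM => by
  obtain ⟨hdom, hdvr⟩ := h M hM
  exact ⟨hdom, inferInstance⟩

variable [IsDomain D] [IsFractionRing D K]

theorem StarDedekind.starADD (hstar : IsSemistarOperation star) (h : StarDedekind star) :
    StarADD star := by
  intro M _ hM
  have := (starNoetherian_iff hstar).mp h.1
  obtain ⟨_, _⟩ := h.2 M hM
  obtain ⟨hM0, hMmax⟩ := (quasiStarMaximal_finTypeOp_iff hstar).mp hM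
  rw [finitaryPart_eq_self] at hMmax
  exact ⟨_, isDiscreteValuationRing_localization_of_isClosed (isScaleInvariant_starClosure hstar)
    hMmax.prop.1 hM0⟩

theorem StarADD.starFiniteCharacter (hstar : IsSemistarOperation star) (h : StarADD star)
    (hnoeth : StarNoetherian star) : StarFiniteCharacter star := by
  intro d hd
  have := (starNoetherian_iff hstar).mp hnoeth
  simp only [StarADD, quasiStarMaximal_finTypeOp_iff hstar, finitaryPart_eq_self] at h ⊢
  refine (finite_setOf_isMaximalClosed_mem (isScaleInvariant_starClosure hstar).isColonStable
    (fun M _ hM hM0 => (h M ⟨hM0, hM⟩).2) hd).subset ?_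
  exact fun M hM => ⟨hM.1.2, hM.2⟩

theorem StarADD.starNoetherian (hstar : IsSemistarOperation star) (h : StarADD star)
    (hfin : StarFiniteCharacter star) : StarNoetherian star := by
  have hcolon := (isScaleInvariant_starClosure hstar).isColonStable.finitaryPart
  have : WellFoundedGT (finitaryPart (starClosure hstar)).Closeds := by
    refine wellFoundedGT_closeds_of_isNoetherianRing_localization (isFinitary_finitaryPart _)
      hcolon (fun M _ hM hM0 => ?_) (fun d hd => (hfin d hd).subset fun M hM => ?_)
    · obtain ⟨_, _⟩ := h M ((quasiStarMaximal_finTypeOp_iff hstar).mpr ⟨hM0, hM⟩)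
      infer_instance
    · have hM0 : M ≠ ⊥ := M.ne_bot_iff.mpr ⟨d, hM.2, hd⟩
      exact ⟨(quasiStarMaximal_finTypeOp_iff hstar).mpr ⟨hM0, hM.1⟩, hM.2⟩
  exact (starNoetherian_iff hstar).mpr wellFoundedGT_closeds_of_finitaryPart

end DedekindDomains

section Statement

variable {D : Type*} [CommRing D] [IsDomain D]
variable {K : Type*} [Field K] [Algebra D K] [IsFractionRing D K]

/-- `D` an integral domain, `⋆` a semistar operation. TFAE:
(1) `D` is a ⋆-Dedekind domain; (2) `D` is a ⋆-almost Dedekind domain with the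
⋆_f-finite character property; (3) `D` is a ⋆-Noetherian ⋆-almost Dedekind domain. -/
theorem starDedekind_iff_starADD_finiteCharacter
    (star : Submodule D K → Submodule D K) (hstar : IsSemistarOperation star) :
    (StarDedekind star ↔ (StarADD star ∧ StarFiniteCharacter star)) ∧
    (StarDedekind star ↔ (StarNoetherian star ∧ StarADD star)) := by
  have hPMD : StarADD star → StarPMD star := StarADD.starPMD
  have hADD : StarDedekind star → StarADD star := StarDedekind.starADD hstar
  refine ⟨⟨fun h => ⟨hADD h, (hADD h).starFiniteCharacter hstar h.1⟩,
    fun ⟨hadd, hfin⟩ => ⟨hadd.starNoetherian hstar hfin, hPMD hadd⟩⟩,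
    ⟨fun h => ⟨h.1, hADD h⟩, fun ⟨hnoeth, hadd⟩ => ⟨hnoeth, hPMD hadd⟩⟩⟩

end Statement
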